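/- There exists a constant C > 0 such that for all integers k, l with k ≥ 3 and l/2 ≤ k ≤ 2l, the two-colour Ramsey number satisfies r(k, l) ≤ k^{-C·(log k)/(log log k)} · C(k+l, k), where C(k+l, k) is the binomial coefficient and log denotes the natural logarithm. -/

import Mathlib

/-- A monochromatic clique of size `k` in colour `i` for an edge-colouring `c` of `K_n`. -/
def monoClique {n q : ℕ} (c : Sym2 (Fin n) → Fin q) (i : Fin q) (k : ℕ) : Prop :=
  ∃ A : Finset (Fin n), A.card = k ∧ ∀ u ∈ A, ∀ v ∈ A, u ≠ v → c s(u, v) = i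

/-- The `q`-colour Ramsey number `r(k 0, …, k (q-1))`. -/
noncomputable def ramseyQ {q : ℕ} (k : Fin q → ℕ) : ℕ :=
  sInf {n : ℕ | ∀ c : Sym2 (Fin n) → Fin q, ∃ i : Fin q, monoClique c i (k i)}

/-- The two-colour Ramsey number `r(s, t)`. -/
noncomputable def ramsey2 (s t : ℕ) : ℕ := ramseyQ ![s, t]

/-- A history in the on-line Ramsey game: the previously presented edges with their colours. -/
abbrev History (q : ℕ) := List (Sym2 ℕ × Fin q)

/-- A Builder strategy is valid if it always presents a genuine new edge. -/
def validBuilder {q : ℕ} (B : History q → Sym2 ℕ) : Prop :=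
  ∀ h : History q, ¬ (B h).IsDiag ∧ B h ∉ h.map Prod.fst

/-- The play determined by a Builder strategy `B` and a Painter strategy `P`:
`play B P n` is the history after `n` rounds. -/
def play {q : ℕ} (B : History q → Sym2 ℕ) (P : History q → Sym2 ℕ → Fin q) : ℕ → History q
  | 0 => []
  | n + 1 =>
      let h := play B P n
      h ++ [(B h, P h (B h))]

/-- The graph formed by the edges of colour `i` in a history. -/
def colourGraph {q : ℕ} (h : History q) (i : Fin q) : SimpleGraph ℕ :=
  SimpleGraph.fromEdgeSet {e | (e, i) ∈ h}

/-- `H` contains a copy of `G` as a subgraph. -/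
def containsCopy {V : Type*} (G : SimpleGraph V) (H : SimpleGraph ℕ) : Prop :=
  ∃ f : V → ℕ, Function.Injective f ∧ ∀ u v, G.Adj u v → H.Adj (f u) (f v)

/-- The `q`-colour on-line Ramsey number of `G`: the least `N` such that Builder has a
valid strategy forcing, against every Painter strategy, a monochromatic copy of `G`
within at most `N` rounds. -/
noncomputable def onlineRamsey {V : Type*} (q : ℕ) (G : SimpleGraph V) : ℕ :=
  sInf {N : ℕ | ∃ B : History q → Sym2 ℕ, validBuilder B ∧
    ∀ P : History q → Sym2 ℕ → Fin q,
      ∃ n ≤ N, ∃ i : Fin q, containsCopy G (colourGraph (play B P n) i)}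

section BookAlg

open Finset

/-- Positive (Gram) kernels. -/
def IsPK {V : Type} (K : V → V → ℝ) : Prop :=
  ∃ (ι : Type) (_ : Fintype ι) (φ : V → ι → ℝ), ∀ u v, K u v = ∑ i, φ u i * φ v i

lemma IsPK.sum_nonneg {V : Type} {K : V → V → ℝ} (h : IsPK K) (X : Finset V) :
    0 ≤ ∑ u ∈ X, ∑ v ∈ X, K u v := by
  obtain ⟨ι, _, φ, h⟩ := h
  have : ∑ u ∈ X, ∑ v ∈ X, K u v = ∑ i, (∑ u ∈ X, φ u i) ^ 2 := by
    simp_rw [h, sq, Finset.sum_mul_sum]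
    rw [Finset.sum_comm' (s := Finset.univ) (t := fun _ => X) (t' := X) (s' := fun _ => Finset.univ)
      (by simp)]
    refine Finset.sum_congr rfl fun u _ => ?_
    rw [Finset.sum_comm]
  rw [this]
  positivity

lemma IsPK.mul {V : Type} {K K' : V → V → ℝ} (h : IsPK K) (h' : IsPK K') :
    IsPK (fun u v => K u v * K' u v) := by
  obtain ⟨ι, _, φ, h⟩ := h
  obtain ⟨ι', _, φ', h'⟩ := h'
  refine ⟨ι × ι', inferInstance, fun u i => φ u i.1 * φ' u i.2, fun u v => ?_⟩
  beta_reduce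
  rw [h, h', Finset.sum_mul_sum, Fintype.sum_prod_type]
  refine Finset.sum_congr rfl fun i _ => Finset.sum_congr rfl fun j _ => ?_
  ring

lemma IsPK.one {V : Type} : IsPK (fun _ _ : V => (1 : ℝ)) :=
  ⟨Unit, inferInstance, fun _ _ => 1, by simp⟩

lemma IsPK.pow {V : Type} {K : V → V → ℝ} (h : IsPK K) (n : ℕ) :
    IsPK (fun u v => K u v ^ n) := by
  induction n with
  | zero => simpa using IsPK.one
  | succ n ih => simpa [pow_succ] using ih.mul h

lemma IsPK.const_mul {V : Type} {K : V → V → ℝ} (h : IsPK K) {c : ℝ} (hc : 0 ≤ c) :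
    IsPK (fun u v => c * K u v) := by
  obtain ⟨ι, _, φ, h⟩ := h
  refine ⟨ι, inferInstance, fun u i => √c * φ u i, fun u v => ?_⟩
  beta_reduce
  rw [h, Finset.mul_sum]
  refine Finset.sum_congr rfl fun i _ => ?_
  have := Real.mul_self_sqrt hc
  linear_combination (-φ u i * φ v i) * this

/-- The entire function `cosh √x`. -/
noncomputable def gfun (x : ℝ) : ℝ := if 0 ≤ x then Real.cosh √x else Real.cos √(-x)

lemma hasSum_gfun (x : ℝ) : HasSum (fun n : ℕ => x ^ n / (2 * n).factorial) (gfun x) := by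
  unfold gfun
  split_ifs with h
  · have := Real.hasSum_cosh √x
    simpa [pow_mul, Real.sq_sqrt h] using this
  · have := Real.hasSum_cos √(-x)
    have h2 : 0 ≤ -x := by linarith
    simp only [pow_mul, Real.sq_sqrt h2] at this
    convert this using 2 with n
    rw [← mul_pow]
    ring

lemma gfun_le_one {x : ℝ} (hx : x ≤ 0) : gfun x ≤ 1 := by
  unfold gfun
  split_ifs with h
  · have : x = 0 := le_antisymm hx h
    simp [this]
  · exact Real.cos_le_one _

lemma neg_one_le_gfun (x : ℝ) : -1 ≤ gfun x := by
  unfold gfun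
  split_ifs with h
  · have := Real.cosh_pos √x
    linarith
  · exact Real.neg_one_le_cos _

lemma gfun_ge {x : ℝ} (hx : 0 ≤ x) : 1 + x / 2 ≤ gfun x := by
  have h := hasSum_gfun x
  have := sum_le_hasSum (Finset.range 2) (fun n _ => by positivity) h
  simpa [Finset.sum_range_succ] using this

lemma gfun_le {x M : ℝ} (hM : 0 ≤ M) (hx : x ≤ M) : gfun x ≤ Real.exp √M := by
  rcases le_or_gt x 0 with h | h
  · exact (gfun_le_one h).trans (Real.one_le_exp (by positivity))
  · unfold gfun
    rw [if_pos h.le, Real.cosh_eq]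
    have h1 : Real.exp √x ≤ Real.exp √M := Real.exp_le_exp.2 (Real.sqrt_le_sqrt hx)
    have h2 : Real.exp (-√x) ≤ Real.exp √x := Real.exp_le_exp.2 (by linarith [Real.sqrt_nonneg x])
    linarith

noncomputable def ffun (x y : ℝ) : ℝ := x * (2 + gfun y) + y * (2 + gfun x)

noncomputable def Fb (M : ℝ) : ℝ := 2 * M * (2 + Real.exp √M)

lemma Fb_ge {M : ℝ} (hM : 1 ≤ M) : 1 ≤ Fb M := by
  unfold Fb
  have := Real.exp_pos √M
  nlinarith

lemma half_le {x y M : ℝ} (hM : 0 ≤ M) (hx : x ≤ M) (hy : y ≤ M) :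
    x * (2 + gfun y) ≤ M * (2 + Real.exp √M) := by
  have h1 := gfun_le hM hy
  have h2 := neg_one_le_gfun y
  calc x * (2 + gfun y) ≤ M * (2 + gfun y) := by nlinarith
    _ ≤ _ := by nlinarith

lemma ffun_le {x y M : ℝ} (hM : 0 ≤ M) (hx : x ≤ M) (hy : y ≤ M) : ffun x y ≤ Fb M := by
  have h1 := half_le hM hx hy
  have h2 := half_le hM hy hx
  unfold ffun Fb
  linarith

lemma ffun_symm (x y : ℝ) : ffun x y = ffun y x := by unfold ffun; ring

lemma ffun_bad {x y : ℝ} (hx : x ≤ -6) : ffun x y ≤ -1 := by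
  unfold ffun
  have h1 := gfun_le_one (show x ≤ 0 by linarith)
  have h1' := neg_one_le_gfun x
  have h2 := neg_one_le_gfun y
  rcases le_or_gt 0 y with h | h
  · have h3 := gfun_ge h
    nlinarith
  · nlinarith

lemma ffun_sum_nonneg {V : Type} {K K' : V → V → ℝ} (h : IsPK K) (h' : IsPK K') (X : Finset V) :
    0 ≤ ∑ u ∈ X, ∑ v ∈ X, ffun (K u v) (K' u v) := by
  have key : ∀ {K K' : V → V → ℝ} (h : IsPK K) (h' : IsPK K'),
      0 ≤ ∑ u ∈ X, ∑ v ∈ X, K u v * (2 + gfun (K' u v)) := by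
    intro K K' h h'
    have hs : HasSum (fun n : ℕ => ∑ u ∈ X, ∑ v ∈ X, K u v * (K' u v ^ n / (2 * n).factorial))
        (∑ u ∈ X, ∑ v ∈ X, K u v * gfun (K' u v)) :=
      hasSum_sum fun u _ => hasSum_sum fun v _ => (hasSum_gfun _).mul_left _
    have h1 := hs.nonneg fun n => by
      have := ((h.mul (h'.pow n)).const_mul
        (c := 1 / ((2 * n).factorial : ℝ)) (by positivity)).sum_nonneg X
      refine this.trans_eq (Finset.sum_congr rfl fun u _ => Finset.sum_congr rfl fun v _ => ?_)
      ring
    have h2 := h.sum_nonneg X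
    have : ∑ u ∈ X, ∑ v ∈ X, K u v * (2 + gfun (K' u v))
        = 2 * ∑ u ∈ X, ∑ v ∈ X, K u v + ∑ u ∈ X, ∑ v ∈ X, K u v * gfun (K' u v) := by
      simp_rw [Finset.mul_sum, ← Finset.sum_add_distrib]
      refine Finset.sum_congr rfl fun u _ => Finset.sum_congr rfl fun v _ => ?_
      ring
    rw [this]; positivity
  have a := key h h'
  have b := key h' h
  simp only [ffun, Finset.sum_add_distrib]
  linarith

/-- Averaging: if every vertex has few `P`-partners, the number of pairs is small. -/
lemma tri {V : Type} {K K' : V → V → ℝ} (h : IsPK K) (h' : IsPK K') (X : Finset V)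
    (hX : X.Nonempty) {Λ M : ℝ} (hΛ : 1 ≤ Λ) (hΛM : Λ ≤ M)
    (hK : ∀ u ∈ X, ∀ v ∈ X, K u v ≤ M) (hK' : ∀ u ∈ X, ∀ v ∈ X, K' u v ≤ M) :
    (∃ u ∈ X, (X.card : ℝ) ≤ 8 * Fb Λ * (X.filter fun v => -6 ≤ K u v ∧ -6 ≤ K' u v).card) ∨
    (∃ u ∈ X, (X.card : ℝ) ≤ 8 * Fb M * (X.filter fun v => Λ ≤ K u v).card) ∨
    (∃ u ∈ X, (X.card : ℝ) ≤ 8 * Fb M * (X.filter fun v => Λ ≤ K' u v).card) := by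
  by_contra hcon
  push Not at hcon
  obtain ⟨h1, h2, h3⟩ := hcon
  have hF1 := Fb_ge hΛ
  have hF2 := Fb_ge (hΛ.trans hΛM)
  have hpos : (0 : ℝ) < X.card := by exact_mod_cast hX.card_pos
  have hS := ffun_sum_nonneg h h' X
  have hrow : ∀ u ∈ X, ∑ v ∈ X, ffun (K u v) (K' u v) < 0 := by
    intro u hu
    have hpt : ∀ v ∈ X, ffun (K u v) (K' u v) ≤ -1
        + (1 + Fb Λ) * (if -6 ≤ K u v ∧ -6 ≤ K' u v then 1 else 0)
        + (1 + Fb M) * (if Λ ≤ K u v then 1 else 0)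
        + (1 + Fb M) * (if Λ ≤ K' u v then 1 else 0) := by
      intro v hv
      have a1 := hK u hu v hv
      have a2 := hK' u hu v hv
      have e1 := ffun_le (by linarith) a1 a2
      by_cases c1 : Λ ≤ K u v
      · rw [if_pos c1]
        split_ifs <;> linarith
      by_cases c2 : Λ ≤ K' u v
      · rw [if_pos c2]
        split_ifs <;> linarith
      rw [if_neg c1, if_neg c2]
      split_ifs with c3
      · have e1 := ffun_le (by linarith) (not_le.1 c1).le (not_le.1 c2).le
        linarith
      · rw [not_and_or] at c3
        rcases c3 with c3 | c3
        · have := ffun_bad (y := K' u v) (not_le.1 c3).le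
          linarith
        · have := ffun_bad (y := K u v) (not_le.1 c3).le
          rw [ffun_symm] at this
          linarith
    have hle := Finset.sum_le_sum hpt
    simp only [Finset.sum_add_distrib, ← Finset.mul_sum, Finset.sum_boole, Finset.sum_const,
      nsmul_eq_mul] at hle
    have b1 := h1 u hu
    have b2 := h2 u hu
    have b3 := h3 u hu
    have c1 : (0 : ℝ) ≤ (X.filter fun v => -6 ≤ K u v ∧ -6 ≤ K' u v).card := by positivity
    have c2 : (0 : ℝ) ≤ (X.filter fun v => Λ ≤ K u v).card := by positivity
    have c3 : (0 : ℝ) ≤ (X.filter fun v => Λ ≤ K' u v).card := by positivity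
    nlinarith
  have := Finset.sum_lt_sum_of_nonempty hX hrow
  simp at this
  linarith

lemma kern_isPK {V : Type} [DecidableEq V] (A : V → Finset V) (Y : Finset V) (p c : ℝ)
    (hc : 0 ≤ c) :
    IsPK (fun u v => c * ∑ y : Y, ((if (y : V) ∈ A u then (1 : ℝ) else 0) - p) *
      ((if (y : V) ∈ A v then (1 : ℝ) else 0) - p)) :=
  IsPK.const_mul ⟨Y, inferInstance, fun u y => (if (y : V) ∈ A u then (1 : ℝ) else 0) - p,
    fun _ _ => rfl⟩ hc

lemma kern_eq {V : Type} [DecidableEq V] (A B Y : Finset V) (d : ℕ) (hA : A ⊆ Y)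
    (hB : B ⊆ Y) (hAd : A.card = d) (hBd : B.card = d) (hY : Y.Nonempty) :
    ∑ y : Y, ((if (y : V) ∈ A then (1 : ℝ) else 0) - d / Y.card) *
      ((if (y : V) ∈ B then (1 : ℝ) else 0) - d / Y.card)
      = (A ∩ B).card - (d / Y.card) * d := by
  have hpos : (Y.card : ℝ) ≠ 0 := by exact_mod_cast hY.card_pos.ne'
  rw [Finset.sum_coe_sort Y (fun y => ((if y ∈ A then (1 : ℝ) else 0) - d / Y.card) *
      ((if y ∈ B then (1 : ℝ) else 0) - d / Y.card))]
  have e : ∀ y ∈ Y, ((if y ∈ A then (1 : ℝ) else 0) - d / Y.card) *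
      ((if y ∈ B then (1 : ℝ) else 0) - d / Y.card) =
      (if y ∈ A ∩ B then 1 else 0) - (d / Y.card) * (if y ∈ A then 1 else 0)
       - (d / Y.card) * (if y ∈ B then 1 else 0) + (d / Y.card) ^ 2 := by
    intro y _
    by_cases h1 : y ∈ A <;> by_cases h2 : y ∈ B <;> simp [h1, h2] <;> ring
  rw [Finset.sum_congr rfl e]
  simp only [Finset.sum_add_distrib, Finset.sum_sub_distrib, ← Finset.mul_sum, Finset.sum_boole,
    Finset.sum_const, nsmul_eq_mul, Finset.filter_mem_eq_inter]
  rw [Finset.inter_eq_right.2 hA, Finset.inter_eq_right.2 hB,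
    Finset.inter_eq_right.2 (Finset.inter_subset_left.trans hA), hAd, hBd]
  field_simp
  ring

lemma step {V : Type} [DecidableEq V] (X : Finset V) (hX : X.Nonempty) (Y : Fin 2 → Finset V)
    (hY : ∀ i, (Y i).Nonempty)
    (A : Fin 2 → V → Finset V) (d : Fin 2 → ℕ) (hd : ∀ i, 0 < d i)
    (hAY : ∀ i, ∀ u ∈ X, A i u ⊆ Y i) (hAd : ∀ i, ∀ u ∈ X, (A i u).card = d i)
    (α : Fin 2 → ℝ) (hα : ∀ i, 0 < α i) {Λ M : ℝ} (hΛ : 1 ≤ Λ) (hΛM : Λ ≤ M)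
    (hM : ∀ i, 1 / α i ≤ M) :
    (∃ u ∈ X, (X.card : ℝ) ≤ 8 * Fb Λ * (X.filter fun v => ∀ i,
      ((d i : ℝ) / (Y i).card - 6 * α i) * d i ≤ (A i u ∩ A i v).card).card) ∨
    (∃ i, ∃ u ∈ X, (X.card : ℝ) ≤ 8 * Fb M * (X.filter fun v =>
      ((d i : ℝ) / (Y i).card + Λ * α i) * d i ≤ (A i u ∩ A i v).card).card) := by
  set K : Fin 2 → V → V → ℝ := fun i u v =>
    (1 / (α i * d i)) * ∑ y : Y i, ((if (y : V) ∈ A i u then (1 : ℝ) else 0) - d i / (Y i).card) *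
      ((if (y : V) ∈ A i v then (1 : ℝ) else 0) - d i / (Y i).card) with hKdef
  have hd' : ∀ i, (0 : ℝ) < d i := fun i => by exact_mod_cast hd i
  have hPK : ∀ i, IsPK (K i) := fun i => kern_isPK (A i) (Y i) _ _ (by
    have := hα i
    positivity)
  have hval : ∀ i, ∀ u ∈ X, ∀ v ∈ X,
      K i u v = (1 / (α i * d i)) * ((A i u ∩ A i v).card - ((d i : ℝ) / (Y i).card) * d i) := by
    intro i u hu v hv
    simp only [hKdef]
    rw [kern_eq (A i u) (A i v) (Y i) (d i) (hAY i u hu) (hAY i v hv) (hAd i u hu) (hAd i v hv)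
      (hY i)]
  have hiff : ∀ i, ∀ u ∈ X, ∀ v ∈ X, ∀ x : ℝ, x ≤ K i u v →
      ((d i : ℝ) / (Y i).card + x * α i) * d i ≤ (A i u ∩ A i v).card := by
    intro i u hu v hv x hx
    rw [hval i u hu v hv, one_div, inv_mul_eq_div, le_div_iff₀ (mul_pos (hα i) (hd' i))] at hx
    linarith
  have hKM : ∀ i, ∀ u ∈ X, ∀ v ∈ X, K i u v ≤ M := by
    intro i u hu v hv
    rw [hval i u hu v hv]
    refine le_trans ?_ (hM i)
    have h1 : ((A i u ∩ A i v).card : ℝ) ≤ d i := by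
      rw [← hAd i u hu]
      exact_mod_cast Finset.card_le_card Finset.inter_subset_left
    have h2 : (0 : ℝ) ≤ ((d i : ℝ) / (Y i).card) * d i := by positivity
    rw [one_div, inv_mul_eq_div, div_le_div_iff₀ (mul_pos (hα i) (hd' i)) (hα i)]
    have := hα i
    nlinarith
  have hFΛ : 0 ≤ 8 * Fb Λ := by linarith [Fb_ge hΛ]
  have hFM : 0 ≤ 8 * Fb M := by linarith [Fb_ge (hΛ.trans hΛM)]
  rcases tri (hPK 0) (hPK 1) X hX hΛ hΛM (hKM 0) (hKM 1) with ⟨u, hu, h⟩ | ⟨u, hu, h⟩ | ⟨u, hu, h⟩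
  · left
    refine ⟨u, hu, h.trans ?_⟩
    gcongr with v hv
    rintro ⟨h0, h1⟩
    have a0 := hiff 0 u hu v hv _ h0
    have a1 := hiff 1 u hu v hv _ h1
    intro i
    fin_cases i
    · simpa [sub_eq_add_neg] using a0
    · simpa [sub_eq_add_neg] using a1
  · right
    refine ⟨0, u, hu, h.trans ?_⟩
    refine mul_le_mul_of_nonneg_left ?_ hFM
    refine Nat.cast_le.2 (Finset.card_le_card fun v hv => ?_)
    rw [Finset.mem_filter] at hv ⊢
    exact ⟨hv.1, hiff 0 u hu v hv.1 _ hv.2⟩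
  · right
    refine ⟨1, u, hu, h.trans ?_⟩
    refine mul_le_mul_of_nonneg_left ?_ hFM
    refine Nat.cast_le.2 (Finset.card_le_card fun v hv => ?_)
    rw [Finset.mem_filter] at hv ⊢
    exact ⟨hv.1, hiff 1 u hu v hv.1 _ hv.2⟩

/-- Neighbourhood of `x` in colour `i` inside `Y`. -/
def nb {V : Type} [DecidableEq V] (c : V → V → Fin 2) (i : Fin 2) (x : V) (Y : Finset V) :
    Finset V := Y.filter fun y => x ≠ y ∧ c x y = i

/-- Monochromatic clique. -/
def IsMono {V : Type} (c : V → V → Fin 2) (i : Fin 2) (T : Finset V) : Prop :=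
  ∀ u ∈ T, ∀ v ∈ T, u ≠ v → c u v = i

lemma IsMono.insert {V : Type} [DecidableEq V] {c : V → V → Fin 2} (hc : ∀ u v, c u v = c v u)
    {i : Fin 2} {T : Finset V} (h : IsMono c i T) {x : V} (hx : ∀ v ∈ T, c x v = i) :
    IsMono c i (insert x T) := by
  intro u hu v hv huv
  rw [Finset.mem_insert] at hu hv
  rcases hu with rfl | hu <;> rcases hv with rfl | hv
  · exact absurd rfl huv
  · exact hx v hv
  · rw [hc]; exact hx u hu
  · exact h u hu v hv huv

lemma sum_update_pred (r : Fin 2 → ℕ) (i : Fin 2) (h : 0 < r i) :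
    (∑ j, Function.update r i (r i - 1) j) + 1 = ∑ j, r j := by
  fin_cases i <;> simp [Fin.sum_univ_two, Function.update] at * <;> omega

lemma card_nb_add {V : Type} [DecidableEq V] (c : V → V → Fin 2) (u : V) (W : Finset V)  :
    W.card ≤ (nb c 0 u W).card + (nb c 1 u W).card + 1 := by
  have : W ⊆ insert u (nb c 0 u W ∪ nb c 1 u W) := by
    intro v hv
    simp only [nb, Finset.mem_insert, Finset.mem_union, Finset.mem_filter]
    by_cases h : u = v
    · exact Or.inl h.symm
    · right
      have : c u v = 0 ∨ c u v = 1 := by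
        generalize c u v = z
        fin_cases z <;> simp
      rcases this with h' | h'
      · exact Or.inl ⟨hv, h, h'⟩
      · exact Or.inr ⟨hv, h, h'⟩
  refine (Finset.card_le_card this).trans ((Finset.card_insert_le _ _).trans ?_)
  have := Finset.card_union_le (nb c 0 u W) (nb c 1 u W)
  omega

theorem book {V : Type} [DecidableEq V] (c : V → V → Fin 2) (hc : ∀ u v, c u v = c v u)
    (t : ℕ) (ht : 2 ≤ t) (base : Fin 2 → ℝ) (hbase : ∀ i, 0 < base i)
    (hbase1 : ∀ i, base i ≤ 1) (S : ℕ)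
    (K₁ K₂ : ℝ) (hK₁ : 32 * Fb (6 * t) ≤ K₁) (hK₂ : 8 * Fb (6 * t * 2 ^ S) ≤ K₂) :
    ∀ m : ℕ, ∀ r s : Fin 2 → ℕ, (∑ i, r i) + ∑ i, s i = m → (∀ i, s i ≤ S) →
    ∀ (X : Finset V) (Y : Fin 2 → Finset V) (q : Fin 2 → ℝ), (∀ i, (Y i).Nonempty) →
    (∀ i, ∀ x ∈ X, (base i + q i) * (Y i).card ≤ (nb c i x (Y i)).card) →
    (∀ i, 1 < q i * 2 ^ s i * (1 - 1 / (t : ℝ)) ^ r i) →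
    K₁ ^ (∑ i, r i) * K₂ ^ (∑ i, s i) ≤ X.card →
    ∃ i, ∃ T ⊆ X, ∃ M ⊆ Y i, T.card = r i ∧ IsMono c i T ∧
      (∀ u ∈ T, ∀ v ∈ M, u ≠ v ∧ c u v = i) ∧ base i ^ (r i + s i) * (Y i).card ≤ M.card := by
  have ht' : (2 : ℝ) ≤ t := by exact_mod_cast ht
  have hΛ : (1 : ℝ) ≤ 6 * t := by linarith
  have h2S : (1 : ℝ) ≤ 2 ^ S := one_le_pow₀ (by norm_num)
  have hΛM : (6 * t : ℝ) ≤ 6 * t * 2 ^ S := by nlinarith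
  have hF1 := Fb_ge hΛ
  have hF2 := Fb_ge (hΛ.trans hΛM)
  have hK1p : 1 ≤ K₁ := by linarith
  have hK2p : 1 ≤ K₂ := by linarith
  have hti : 0 < 1 / (t : ℝ) := by positivity
  have hti2 : 1 / (t : ℝ) ≤ 1 / 2 := by gcongr
  intro m
  induction m with
  | zero =>
    intro r s hm _ X Y q hY _ _ _
    have : r 0 = 0 ∧ s 0 = 0 := by
      simp only [Fin.sum_univ_two] at hm; omega
    exact ⟨0, ∅, by simp, Y 0, subset_rfl, by simp [this], by simp [IsMono], by simp, by
      simp [this]⟩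
  | succ m ih =>
    intro r s hm hs X Y q hY hdeg hq hcard
    by_cases hr : ∃ i, r i = 0
    · obtain ⟨i, hi⟩ := hr
      refine ⟨i, ∅, by simp, Y i, subset_rfl, by simp [hi], by simp [IsMono], by simp, ?_⟩
      exact mul_le_of_le_one_left (by positivity) (pow_le_one₀ (hbase i).le (hbase1 i))
    push Not at hr
    have hrpos : ∀ i, 0 < r i := fun i => Nat.pos_of_ne_zero (hr i)
    have hXK : K₁ ≤ X.card := by
      refine le_trans ?_ hcard
      have h1 : K₁ ≤ K₁ ^ (∑ i, r i) := le_self_pow₀ hK1p (by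
        have := hr 0
        simp only [Fin.sum_univ_two]; omega)
      have h2 : 1 ≤ K₂ ^ (∑ i, s i) := one_le_pow₀ hK2p
      nlinarith
    have hXne : X.Nonempty := by
      rw [← Finset.card_pos]
      have : (0 : ℝ) < X.card := by linarith
      exact_mod_cast this
    have hpw : ∀ i, (1 - 1 / (t : ℝ)) ^ r i ≤ 1 := fun i => pow_le_one₀ (by linarith) (by linarith)
    have hpw0 : ∀ i, 0 < (1 - 1 / (t : ℝ)) ^ r i := fun i => pow_pos (by linarith) _
    have hqpos : ∀ i, 0 < q i := by
      intro i
      by_contra hneg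
      have := hq i
      have h3 : q i * 2 ^ s i * (1 - 1 / (t : ℝ)) ^ r i ≤ 0 :=
        mul_nonpos_of_nonpos_of_nonneg
          (mul_nonpos_of_nonpos_of_nonneg (not_lt.1 hneg) (by positivity)) (hpw0 i).le
      linarith
    have hq2 : ∀ i, 1 < q i * 2 ^ s i := fun i => by
      refine (hq i).trans_le (mul_le_of_le_one_right ?_ (hpw i))
      have := hqpos i
      positivity
    have hqS : ∀ i, 1 ≤ q i * 2 ^ S := fun i => by
      refine (hq2 i).le.trans ?_
      have := hqpos i
      gcongr
      · norm_num
      · exact hs i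
    have hYp : ∀ i, (0 : ℝ) < (Y i).card := fun i => by exact_mod_cast (hY i).card_pos
    -- the trimmed neighbourhoods
    set d : Fin 2 → ℕ := fun i => ⌈(base i + q i) * (Y i).card⌉₊ with hddef
    have hdp : ∀ i, 0 < d i := fun i => Nat.ceil_pos.2 (by
      have := hbase i; have := hqpos i; have := hYp i; positivity)
    have hdp' : ∀ i, (0 : ℝ) < d i := fun i => by exact_mod_cast hdp i
    have hdle : ∀ i, base i + q i ≤ (d i : ℝ) / (Y i).card := fun i => by
      rw [le_div_iff₀ (hYp i)]
      exact Nat.le_ceil _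
    have hAex : ∀ i, ∀ u, ∃ B : Finset V, u ∈ X → B ⊆ nb c i u (Y i) ∧ B.card = d i := by
      intro i u
      by_cases hu : u ∈ X
      · obtain ⟨B, hB⟩ := Finset.exists_subset_card_eq
          (s := nb c i u (Y i)) (n := d i) (Nat.ceil_le.2 (hdeg i u hu))
        exact ⟨B, fun _ => hB⟩
      · exact ⟨∅, fun h => absurd h hu⟩
    choose A hA using hAex
    have hnbY : ∀ i u, nb c i u (Y i) ⊆ Y i := fun i u => Finset.filter_subset _ _
    have hAY : ∀ i, ∀ u ∈ X, A i u ⊆ Y i := fun i u hu => (hA i u hu).1.trans (hnbY i u)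
    have hAc : ∀ i, ∀ u ∈ X, ∀ v ∈ A i u, u ≠ v ∧ c u v = i := fun i u hu v hv => by
      have := (hA i u hu).1 hv
      simp only [nb, Finset.mem_filter] at this
      exact this.2
    have hAi : ∀ i, ∀ u ∈ X, ∀ v ∈ X, A i u ∩ A i v ⊆ nb c i v (A i u) := by
      intro i u hu v hv y hy
      rw [Finset.mem_inter] at hy
      have := (hA i v hv).1 hy.2
      simp only [nb, Finset.mem_filter] at this ⊢
      exact ⟨hy.1, this.2⟩
    have hAne : ∀ i, ∀ u ∈ X, (A i u).Nonempty := fun i u hu => by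
      rw [← Finset.card_pos, (hA i u hu).2]; exact hdp i
    have hbd : ∀ i, base i * (Y i).card ≤ d i := fun i => by
      have := hdle i
      rw [le_div_iff₀ (hYp i)] at this
      have h2 := hqpos i
      have := hYp i
      nlinarith
    rcases step X hXne Y hY A d hdp hAY (fun i u hu => (hA i u hu).2)
      (fun i => q i / (6 * t)) (fun i => by have := hqpos i; positivity) hΛ hΛM
      (fun i => by
        have h1 := hqpos i
        rw [one_div_div, div_le_iff₀ h1]
        have := hqS i
        nlinarith) with ⟨u, hu, h⟩ | ⟨i, u, hu, h⟩
    · -- colour step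
      set X₁ := X.filter fun v => ∀ i,
        ((d i : ℝ) / (Y i).card - 6 * (q i / (6 * t))) * d i ≤ (A i u ∩ A i v).card with hX₁
      have hX14 : (4 : ℝ) ≤ X₁.card := by
        by_contra hlt
        push Not at hlt
        nlinarith
      obtain ⟨i, hi⟩ : ∃ i, (X₁.card : ℝ) ≤ 4 * (nb c i u X₁).card := by
        have h1 := card_nb_add c u X₁
        have h1' : (X₁.card : ℝ) ≤ (nb c 0 u X₁).card + (nb c 1 u X₁).card + 1 := by
          exact_mod_cast h1
        by_contra hno
        push Not at hno
        have h2 := hno 0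
        have h3 := hno 1
        linarith
      have hX1X : X₁ ⊆ X := Finset.filter_subset _ _
      have hnbX : nb c i u X₁ ⊆ X := (Finset.filter_subset _ _).trans hX1X
      have hru := sum_update_pred r i (hrpos i)
      obtain ⟨j, T, hTX, M, hMY, hTc, hT, hTM, hMc⟩ := ih (Function.update r i (r i - 1)) s
        (by omega) hs (nb c i u X₁) (Function.update Y i (A i u))
        (Function.update q i (q i * (1 - 1 / t)))
        (by
          intro j
          by_cases hj : j = i
          · subst hj; simpa using hAne j u hu
          · simpa [hj] using hY j)
        (by
          intro j x hx
          by_cases hj : j = i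
          · subst hj
            simp only [Function.update_self]
            have hx1 : x ∈ X₁ := (Finset.mem_filter.1 hx).1
            have hx2 := (Finset.mem_filter.1 hx1).2 j
            have h4 : ((A j u ∩ A j x).card : ℝ) ≤ (nb c j x (A j u)).card := by
              exact_mod_cast Finset.card_le_card (hAi j u hu x (hX1X hx1))
            refine le_trans ?_ (hx2.trans h4)
            rw [(hA j u hu).2]
            refine mul_le_mul_of_nonneg_right ?_ (hdp' j).le
            have h5 := hdle j
            have h6 : 6 * (q j / (6 * t)) = q j * (1 / t) := by field_simp
            rw [h6]
            linarith
          · simpa [hj] using hdeg j x (hnbX hx))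
        (by
          intro j
          by_cases hj : j = i
          · subst hj
            simp only [Function.update_self]
            have := hq j
            obtain ⟨k, hk⟩ : ∃ k, r j = k + 1 := ⟨r j - 1, by have := hrpos j; omega⟩
            rw [hk, pow_succ] at this
            rw [hk, Nat.add_sub_cancel]
            linarith
          · simpa [hj] using hq j)
        (by
          rw [← hru, pow_succ] at hcard
          have h7 : (X.card : ℝ) ≤ K₁ * (nb c i u X₁).card := by
            have : (0:ℝ) ≤ (nb c i u X₁).card := by positivity
            nlinarith
          have h8 : K₁ * (K₁ ^ (∑ j, Function.update r i (r i - 1) j) * K₂ ^ (∑ j, s j))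
            ≤ K₁ * (nb c i u X₁).card := by linarith
          exact le_of_mul_le_mul_left h8 (by linarith))
      by_cases hj : j = i
      · subst hj
        simp only [Function.update_self] at hMY hTc hMc
        have hTu : ∀ v ∈ T, u ≠ v ∧ c u v = j := fun v hv => (Finset.mem_filter.1 (hTX hv)).2
        have huT : u ∉ T := fun h => (hTu u h).1 rfl
        refine ⟨j, insert u T, ?_, M, hMY.trans (hAY j u hu), ?_,
          hT.insert hc (fun v hv => (hTu v hv).2), ?_, ?_⟩
        · exact Finset.insert_subset hu (hTX.trans hnbX)
        · rw [Finset.card_insert_of_notMem huT, hTc]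
          have := hrpos j
          omega
        · intro w hw v hv
          rcases Finset.mem_insert.1 hw with rfl | hw
          · exact hAc j w hu v (hMY hv)
          · exact hTM w hw v hv
        · refine le_trans ?_ hMc
          rw [(hA j u hu).2]
          obtain ⟨k, hk⟩ : ∃ k, r j = k + 1 := ⟨r j - 1, by have := hrpos j; omega⟩
          rw [hk, Nat.add_sub_cancel, show k + 1 + s j = (k + s j) + 1 by ring, pow_succ, mul_assoc]
          have := hbase j
          gcongr
          exact hbd j
      · simp only [Function.update_of_ne hj] at hMY hTc hMc
        exact ⟨j, T, hTX.trans hnbX, M, hMY, hTc, hT, hTM, hMc⟩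
    · -- density boost
      set X₁ := X.filter fun v =>
        ((d i : ℝ) / (Y i).card + (6 * t) * (q i / (6 * t))) * d i ≤ (A i u ∩ A i v).card with hX₁
      have hX1X : X₁ ⊆ X := Finset.filter_subset _ _
      have h6 : (6 * t) * (q i / (6 * t)) = q i := by field_simp
      have hsp : 0 < s i := by
        by_contra h0
        have h0 : s i = 0 := by omega
        have h1 := hq2 i
        have h2 := hdeg i u hu
        have h3 : ((nb c i u (Y i)).card : ℝ) ≤ (Y i).card := by
          exact_mod_cast Finset.card_le_card (hnbY i u)
        rw [h0] at h1
        have := hbase i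
        have := hYp i
        nlinarith
      have hsu := sum_update_pred s i hsp
      obtain ⟨j, T, hTX, M, hMY, hTc, hT, hTM, hMc⟩ := ih r (Function.update s i (s i - 1))
        (by omega) (by
          intro j
          by_cases hj : j = i
          · subst hj; simp; have := hs j; omega
          · simpa [hj] using hs j) X₁ (Function.update Y i (A i u))
        (Function.update q i (q i * 2))
        (by
          intro j
          by_cases hj : j = i
          · subst hj; simpa using hAne j u hu
          · simpa [hj] using hY j)
        (by
          intro j x hx
          by_cases hj : j = i
          · subst hj
            simp only [Function.update_self]
            have hx2 := (Finset.mem_filter.1 hx).2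
            have h4 : ((A j u ∩ A j x).card : ℝ) ≤ (nb c j x (A j u)).card := by
              exact_mod_cast Finset.card_le_card (hAi j u hu x (hX1X hx))
            refine le_trans ?_ (hx2.trans h4)
            rw [(hA j u hu).2]
            refine mul_le_mul_of_nonneg_right ?_ (hdp' j).le
            have h5 := hdle j
            rw [h6]
            linarith
          · simpa [hj] using hdeg j x (hX1X hx))
        (by
          intro j
          by_cases hj : j = i
          · subst hj
            simp only [Function.update_self]
            have := hq j
            obtain ⟨k, hk⟩ : ∃ k, s j = k + 1 := ⟨s j - 1, by omega⟩
            rw [hk, pow_succ] at this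
            rw [hk, Nat.add_sub_cancel]
            linarith
          · simpa [hj] using hq j)
        (by
          rw [← hsu, pow_succ] at hcard
          have h7 : (X.card : ℝ) ≤ K₂ * X₁.card := by
            have : (0:ℝ) ≤ X₁.card := by positivity
            nlinarith
          have h8 : K₂ * (K₁ ^ (∑ j, r j) * K₂ ^ (∑ j, Function.update s i (s i - 1) j))
            ≤ K₂ * X₁.card := by linarith
          exact le_of_mul_le_mul_left h8 (by linarith))
      by_cases hj : j = i
      · subst hj
        simp only [Function.update_self] at hMY hMc
        refine ⟨j, T, hTX.trans hX1X, M, hMY.trans (hAY j u hu), hTc, hT, hTM, ?_⟩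
        refine le_trans ?_ hMc
        rw [(hA j u hu).2]
        obtain ⟨k, hk⟩ : ∃ k, s j = k + 1 := ⟨s j - 1, by omega⟩
        rw [hk, Nat.add_sub_cancel, ← add_assoc, pow_succ, mul_assoc]
        have := hbase j
        gcongr
        exact hbd j
      · simp only [Function.update_of_ne hj] at hMY hMc
        exact ⟨j, T, hTX.trans hX1X, M, hMY, hTc, hT, hTM, hMc⟩

def HasM {V : Type} (c : V → V → Fin 2) (i : Fin 2) (k : ℕ) (W : Finset V) : Prop :=
  ∃ T ⊆ W, T.card = k ∧ IsMono c i T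

lemma HasM.mono {V : Type} {c : V → V → Fin 2} {i : Fin 2} {k : ℕ} {W W' : Finset V}
    (h : HasM c i k W) (hW : W ⊆ W') : HasM c i k W' := by
  obtain ⟨T, hT, h⟩ := h
  exact ⟨T, hT.trans hW, h⟩

lemma HasM.of_nb {V : Type} [DecidableEq V] {c : V → V → Fin 2} (hc : ∀ u v, c u v = c v u)
    {i : Fin 2} {k : ℕ} {W : Finset V} {u : V} (hu : u ∈ W)
    (h : HasM c i k (nb c i u W)) : HasM c i (k + 1) W := by
  obtain ⟨T, hT, hk, hm⟩ := h
  have hTu : ∀ v ∈ T, u ≠ v ∧ c u v = i := fun v hv => (Finset.mem_filter.1 (hT hv)).2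
  refine ⟨insert u T, Finset.insert_subset hu (hT.trans (Finset.filter_subset _ _)), ?_,
    hm.insert hc fun v hv => (hTu v hv).2⟩
  rw [Finset.card_insert_of_notMem (fun h => (hTu u h).1 rfl), hk]

lemma es {V : Type} [DecidableEq V] {c : V → V → Fin 2} (hc : ∀ u v, c u v = c v u) :
    ∀ n j m : ℕ, j + m = n → ∀ W : Finset V, (j + m).choose j ≤ W.card →
      HasM c 0 (j + 1) W ∨ HasM c 1 (m + 1) W := by
  intro n
  induction n with
  | zero =>
    intro j m h W hW
    obtain ⟨rfl, rfl⟩ : j = 0 ∧ m = 0 := by omega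
    left
    obtain ⟨u, hu⟩ : W.Nonempty := Finset.card_pos.1 (by simpa using hW)
    exact ⟨{u}, by simpa using hu, by simp, by intro x hx y hy hxy; simp_all⟩
  | succ n ih =>
    intro j m h W hW
    have hne : W.Nonempty := Finset.card_pos.1 (lt_of_lt_of_le (Nat.choose_pos (by omega)) hW)
    obtain ⟨u, hu⟩ := hne
    have hsing : ∀ i, HasM c i 1 W := fun i =>
      ⟨{u}, by simpa using hu, by simp, by intro x hx y hy hxy; simp_all⟩
    rcases j with _ | j
    · exact Or.inl (hsing 0)
    rcases m with _ | m
    · exact Or.inr (hsing 1)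
    have hcard := card_nb_add c u W
    have hpas : (j + 1 + (m + 1)).choose (j + 1) =
        (j + (m + 1)).choose j + (j + 1 + m).choose (j + 1) := by
      rw [show j + 1 + (m + 1) = (j + m + 1) + 1 by ring, Nat.choose_succ_succ,
        show j + (m + 1) = j + m + 1 by ring, show j + 1 + m = j + m + 1 by ring]
    by_cases h0 : (j + (m + 1)).choose j ≤ (nb c 0 u W).card
    · rcases ih j (m + 1) (by omega) _ h0 with h | h
      · exact Or.inl (h.of_nb hc hu)
      · exact Or.inr (h.mono (Finset.filter_subset _ _))
    · rcases ih (j + 1) m (by omega) (nb c 1 u W) (by omega) with h | h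
      · exact Or.inl (h.mono (Finset.filter_subset _ _))
      · exact Or.inr (h.of_nb hc hu)

lemma es_weak {V : Type} [DecidableEq V] {c : V → V → Fin 2} (hc : ∀ u v, c u v = c v u)
    (k l : ℕ) (W : Finset V) (hW : (k + l).choose k ≤ W.card) :
    HasM c 0 k W ∨ HasM c 1 l W := by
  rcases k with _ | k
  · exact Or.inl ⟨∅, by simp, rfl, by simp [IsMono]⟩
  rcases l with _ | l
  · exact Or.inr ⟨∅, by simp, rfl, by simp [IsMono]⟩
  refine es hc _ k l rfl W (le_trans ?_ hW)
  rw [show k + 1 + (l + 1) = (k + l + 1) + 1 by ring, Nat.choose_succ_succ]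
  exact (Nat.choose_le_choose k (Nat.le_succ _)).trans (Nat.le_add_right _ _)

lemma ratio (k l : ℕ) (hl : 0 < l) (θ : ℝ) (hθ : θ * (k * (k + l)) ≤ l) (hθ0 : 0 ≤ θ) :
    ∀ j : ℕ, j ≤ k → (((k - j + l).choose l : ℕ) : ℝ) ≤
      (k / (k + l) : ℝ) ^ j * Real.exp (-(j * (j - 1) / 2 * θ)) * ((k + l).choose l : ℕ) := by
  intro j
  induction j with
  | zero => simp
  | succ j ih =>
    intro hj
    have ih := ih (by omega)
    obtain ⟨n, rfl⟩ : ∃ n, k = n + (j + 1) := ⟨k - (j + 1), by omega⟩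
    rw [show n + (j + 1) - (j + 1) = n by omega]
    rw [show n + (j + 1) - j = n + 1 by omega] at ih
    have h1 := Nat.choose_mul_succ_eq (n + l) l
    rw [show n + l + 1 - l = n + 1 by omega, show n + l + 1 = n + 1 + l by ring] at h1
    have h1' : (((n + l).choose l : ℕ) : ℝ) * (n + 1 + l) = ((n + 1 + l).choose l : ℕ) * (n + 1) := by
      exact_mod_cast h1
    have hl' : (0 : ℝ) < l := by exact_mod_cast hl
    have e1 : (((n + l).choose l : ℕ) : ℝ) =
        ((n + 1) / (n + 1 + l)) * ((n + 1 + l).choose l : ℕ) := by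
      field_simp
      linarith
    set p : ℝ := (((n + (j + 1) : ℕ) : ℝ) / ((n + (j + 1) : ℕ) + l)) with hp
    have hp0 : 0 ≤ p := by positivity
    have e2 : ((n + 1) / (n + 1 + l) : ℝ) ≤ p * Real.exp (-(j * θ)) := by
      have : 1 - j * θ ≤ Real.exp (-(j * θ)) := by
        have := Real.add_one_le_exp (-(j * θ)); linarith
      refine le_trans ?_ (mul_le_mul_of_nonneg_left this hp0)
      rw [hp, div_mul_eq_mul_div, div_le_div_iff₀ (by positivity) (by positivity)]
      push_cast at hθ ⊢
      have hj0 : (0 : ℝ) ≤ j := by positivity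
      have h3 : j * (θ * ((n + (j + 1)) * (n + (j + 1) + l))) ≤ j * (l : ℝ) := by gcongr
      have h4 : (0 : ℝ) ≤ j * θ * ((n + (j + 1)) * j) := by positivity
      nlinarith
    rw [e1]
    calc _ ≤ p * Real.exp (-(j * θ)) * (p ^ j * Real.exp (-(j * (j - 1) / 2 * θ)) *
            ((n + (j + 1) + l).choose l : ℕ)) := by
          gcongr
      _ = _ := by
          rw [pow_succ]
          have : Real.exp (-(((j + 1 : ℕ) : ℝ) * ((j + 1 : ℕ) - 1) / 2 * θ)) =
            Real.exp (-(j * θ)) * Real.exp (-(j * (j - 1) / 2 * θ)) := by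
            rw [← Real.exp_add]
            congr 1
            push_cast
            ring
          rw [this]
          ring

lemma two_pow_le_choose (k l A : ℕ) (hk : A ≤ k) (hl : A ≤ l) : 2 ^ A ≤ (k + l).choose k := by
  have h1 : 2 ^ A ≤ A.centralBinom := by
    rcases Nat.eq_zero_or_pos A with rfl | h
    · simp
    have h1 := Nat.four_pow_le_two_mul_self_mul_centralBinom A h
    have h2 : 2 * A ≤ 2 ^ A := by
      obtain ⟨n, rfl⟩ : ∃ n, A = n + 1 := ⟨A - 1, by omega⟩
      have : n < 2 ^ n := Nat.lt_two_pow_self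
      rw [pow_succ]
      omega
    have h3 : 2 ^ A * 2 ^ A ≤ 2 ^ A * A.centralBinom := by
      rw [← mul_pow]
      exact h1.trans (Nat.mul_le_mul_right _ h2)
    exact Nat.le_of_mul_le_mul_left h3 (by positivity)
  refine h1.trans ?_
  rw [Nat.centralBinom]
  calc (2 * A).choose A ≤ (A + l).choose A := Nat.choose_le_choose _ (by omega)
    _ = (A + l).choose l := Nat.choose_symm_add
    _ ≤ (k + l).choose l := Nat.choose_le_choose _ (by omega)
    _ = _ := Nat.choose_symm_add.symm

lemma exp_cube {x : ℝ} (hx : 0 ≤ x) : x ^ 3 / 6 ≤ Real.exp x := by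
  have := Real.pow_div_factorial_le_exp x hx 3
  simpa [Nat.factorial] using this

lemma exp_neg_two_le {x : ℝ} (hx : 0 ≤ x) (hx1 : x ≤ 1 / 2) : Real.exp (-(2 * x)) ≤ 1 - x := by
  rw [Real.exp_neg, inv_le_comm₀ (Real.exp_pos _) (by linarith)]
  refine le_trans ?_ (Real.add_one_le_exp _)
  rw [inv_le_iff_one_le_mul₀ (by linarith)]
  nlinarith

lemma Fb_bound {M y : ℝ} (hM : 0 ≤ M) (hy : 0 ≤ y) (h : M ≤ y ^ 2) :
    Fb M ≤ 6 * y ^ 2 * Real.exp y := by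
  unfold Fb
  have h1 : √M ≤ y := Real.sqrt_le_iff.2 ⟨hy, h⟩
  have h2 : Real.exp √M ≤ Real.exp y := Real.exp_le_exp.2 h1
  have h3 : 1 ≤ Real.exp y := Real.one_le_exp hy
  calc _ ≤ 2 * y ^ 2 * (2 + Real.exp y) := by gcongr
    _ ≤ _ := by nlinarith [sq_nonneg y]

lemma one_sub_pow (t : ℕ) (ht : 2 ≤ t) : (1 : ℝ) / 16 ≤ (1 - 1 / (t : ℝ)) ^ t := by
  have ht' : (2 : ℝ) ≤ t := by exact_mod_cast ht
  have h1 := exp_neg_two_le (x := 1 / (t : ℝ)) (by positivity) (by gcongr)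
  have h2 : Real.exp (-(2 * (1 / (t : ℝ)))) ^ t = Real.exp (-2) := by
    rw [← Real.exp_nat_mul]
    congr 1
    field_simp
  have h3 := pow_le_pow_left₀ (Real.exp_pos _).le h1 t
  rw [h2] at h3
  refine le_trans ?_ h3
  rw [Real.exp_neg, one_div]
  refine inv_anti₀ (Real.exp_pos _) ?_
  have := Real.exp_one_lt_d9
  rw [show (2 : ℝ) = 1 + 1 by norm_num, Real.exp_add]
  nlinarith [Real.exp_pos 1]

/-- `binom (k 0 + k 1) (k 0)`. -/
def Bn (k : Fin 2 → ℕ) : ℕ := (k 0 + k 1).choose (k 0)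

lemma exists_S (a : ℕ) (ha : 10 ^ 7 ≤ a) :
    ∃ S : ℕ, S ≤ a ∧ 16 * (a : ℝ) ^ 5 < 2 ^ S ∧ (2 : ℝ) ^ S ≤ 32 * (a : ℝ) ^ 5 := by
  have ha' : (10 : ℝ) ^ 7 ≤ a := by exact_mod_cast ha
  have h0 : 16 * a ^ 5 ≠ 0 := by positivity
  have h1 : 2 ^ (Nat.log 2 (16 * a ^ 5)) ≤ 16 * a ^ 5 := Nat.pow_log_le_self 2 h0
  have h2 : 16 * a ^ 5 < 2 ^ (Nat.log 2 (16 * a ^ 5) + 1) := Nat.lt_pow_succ_log_self (by norm_num) _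
  have h3 : 2 ^ (Nat.log 2 (16 * a ^ 5) + 1) ≤ 32 * a ^ 5 := by rw [pow_succ]; omega
  refine ⟨Nat.log 2 (16 * a ^ 5) + 1, ?_, by exact_mod_cast h2, by exact_mod_cast h3⟩
  rw [← Nat.pow_le_pow_iff_right (a := 2) (by norm_num)]
  refine h3.trans ?_
  have h4 : (32 : ℝ) * a ^ 5 ≤ 2 ^ a := by
    have h5 := Real.pow_div_factorial_le_exp ((a : ℝ) / 2) (by positivity) 6
    have h6 : Real.exp ((a : ℝ) / 2) ≤ 2 ^ a := by
      have : Real.exp (1 / 2) ≤ 2 := by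
        have h7 : Real.exp (1 / 2) * Real.exp (1 / 2) = Real.exp 1 := by
          rw [← Real.exp_add]; norm_num
        have := Real.exp_one_lt_d9
        by_contra hcon
        push Not at hcon
        nlinarith
      calc Real.exp ((a : ℝ) / 2) = Real.exp (1 / 2) ^ a := by
            rw [← Real.exp_nat_mul]; congr 1; ring
        _ ≤ 2 ^ a := by gcongr
    refine le_trans ?_ (h5.trans h6)
    have h8 : (Nat.factorial 6 : ℝ) = 720 := by norm_num [Nat.factorial]
    rw [h8, div_pow, le_div_iff₀ (by norm_num), le_div_iff₀ (by norm_num)]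
    have : (a : ℝ) ^ 6 = a * a ^ 5 := by ring
    rw [this]
    have : (0 : ℝ) ≤ (a : ℝ) ^ 5 := by positivity
    nlinarith
  exact_mod_cast h4

lemma Bn_ge (a : ℕ) (k : Fin 2 → ℕ) (hk : ∀ i, a ^ 10 ≤ k i) :
    Real.exp ((a : ℝ) ^ 10 / 2) ≤ Bn k := by
  have h := two_pow_le_choose (k 0) (k 1) (a ^ 10) (hk 0) (hk 1)
  have h' : (2 : ℝ) ^ (a ^ 10) ≤ Bn k := by
    unfold Bn; exact_mod_cast h
  refine le_trans ?_ h'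
  have : Real.exp (1 / 2) ≤ 2 := by
    have h7 : Real.exp (1 / 2) * Real.exp (1 / 2) = Real.exp 1 := by
      rw [← Real.exp_add]; norm_num
    have := Real.exp_one_lt_d9
    by_contra hcon
    push Not at hcon
    nlinarith
  calc Real.exp ((a : ℝ) ^ 10 / 2) = Real.exp (1 / 2) ^ (a ^ 10) := by
        rw [← Real.exp_nat_mul]; congr 1; push_cast; ring
    _ ≤ _ := by gcongr

/-- The size of the page set of a book versus the Erdős–Szekeres bound. -/
lemma page_bound {V : Type} [DecidableEq V] (c : V → V → Fin 2) (hc : ∀ u v, c u v = c v u)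
    (k : Fin 2 → ℕ) (W : Finset V) (hno : ∀ i, ¬ HasM c i (k i) W) (i : Fin 2) (t : ℕ)
    (ht : t ≤ k i) (hkpos : ∀ i, 0 < k i)
    (T M : Finset V) (hTW : T ⊆ W) (hMW : M ⊆ W) (hTc : T.card = t) (hT : IsMono c i T)
    (hTM : ∀ u ∈ T, ∀ v ∈ M, c u v = i) (hdisj : Disjoint T M)
    (θ : ℝ) (hθ0 : 0 ≤ θ) (hθ : θ * (k i * (k 0 + k 1)) ≤ k (1 - i)) :
    (M.card : ℝ) ≤ (k i / (k 0 + k 1) : ℝ) ^ t * Real.exp (-(t * (t - 1) / 2 * θ)) * Bn k := by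
  have hext : ¬ HasM c i (k i - t) M := by
    rintro ⟨T', hT', hcd, hm⟩
    refine hno i ⟨T ∪ T', Finset.union_subset hTW (hT'.trans hMW), ?_, ?_⟩
    · rw [Finset.card_union_of_disjoint (hdisj.mono_right hT'), hTc, hcd]
      omega
    · intro u hu v hv huv
      rcases Finset.mem_union.1 hu with hu | hu <;> rcases Finset.mem_union.1 hv with hv | hv
      · exact hT u hu v hv huv
      · exact hTM u hu v (hT' hv)
      · rw [hc]; exact hTM v hv u (hT' hu)
      · exact hm u hu v hv huv
  have hoth : ∀ j, ¬ HasM c j (k j) M := fun j h => hno j (h.mono hMW)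
  have hlt : M.card ≤ (k i - t + k (1 - i)).choose (k (1 - i)) := by
    by_contra hcon
    push Not at hcon
    have h01 : i = 0 ∨ i = 1 := by fin_cases i <;> simp
    rcases h01 with rfl | rfl
    · rcases es_weak hc (k 0 - t) (k 1) M (by
        rw [Nat.choose_symm_add]; exact hcon.le) with h | h
      · exact hext h
      · exact hoth 1 h
    · rcases es_weak hc (k 0) (k 1 - t) M (by
        rw [add_comm]; exact hcon.le) with h | h
      · exact hoth 0 h
      · exact hext h
  have hsum : (k i : ℝ) + k (1 - i) = k 0 + k 1 := by
    fin_cases i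
    · simp
    · simp [add_comm]
  have hB : Bn k = (k i + k (1 - i)).choose (k (1 - i)) := by
    unfold Bn
    fin_cases i
    · simpa using Nat.choose_symm_add
    · simp [add_comm]
  have := ratio (k i) (k (1 - i)) (hkpos _) θ (by rw [hsum]; exact hθ) hθ0 t ht
  rw [hsum, ← hB] at this
  exact le_trans (by exact_mod_cast hlt) this

lemma core_K1 (a : ℕ) (ha : 10 ^ 7 ≤ a) :
    32 * Fb (6 * ((a ^ 6 : ℕ) : ℝ)) ≤ Real.exp (4 * a ^ 3) := by
  have ha' : (10 : ℝ) ^ 7 ≤ a := by exact_mod_cast ha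
  have ha0 : (0 : ℝ) < a := by linarith
  have ha1 : (1 : ℝ) ≤ a := by linarith
  have h1 : Fb (6 * ((a ^ 6 : ℕ) : ℝ)) ≤ 6 * (3 * (a : ℝ) ^ 3) ^ 2 * Real.exp (3 * a ^ 3) :=
    Fb_bound (by positivity) (by positivity) (by
      push_cast
      have : (0 : ℝ) ≤ a ^ 6 := by positivity
      nlinarith)
  have h2 := exp_cube (x := (a : ℝ) ^ 3) (by positivity)
  have h3 : Real.exp (4 * a ^ 3) = Real.exp (3 * a ^ 3) * Real.exp ((a : ℝ) ^ 3) := by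
    rw [← Real.exp_add]; congr 1; ring
  rw [h3]
  have h4 : 32 * (6 * (3 * (a : ℝ) ^ 3) ^ 2) ≤ ((a : ℝ) ^ 3) ^ 3 / 6 := by
    have : (10 : ℝ) ^ 7 ≤ a ^ 3 := ha'.trans (le_self_pow₀ ha1 (by norm_num))
    have : (0 : ℝ) ≤ (a ^ 3) ^ 2 := by positivity
    nlinarith
  have h5 := Real.exp_pos (3 * (a : ℝ) ^ 3)
  nlinarith

lemma core_K2 (a : ℕ) (ha : 10 ^ 7 ≤ a) (S : ℕ) (hS2 : (2 : ℝ) ^ S ≤ 32 * (a : ℝ) ^ 5) :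
    8 * Fb (6 * ((a ^ 6 : ℕ) : ℝ) * 2 ^ S) ≤ Real.exp (2 * a ^ 6) := by
  have ha' : (10 : ℝ) ^ 7 ≤ a := by exact_mod_cast ha
  have ha0 : (0 : ℝ) < a := by linarith
  have ha1 : (1 : ℝ) ≤ a := by linarith
  have h1 : Fb (6 * ((a ^ 6 : ℕ) : ℝ) * 2 ^ S) ≤ 6 * ((a : ℝ) ^ 6) ^ 2 * Real.exp (a ^ 6) :=
    Fb_bound (by positivity) (by positivity) (by
      push_cast
      calc 6 * (a : ℝ) ^ 6 * 2 ^ S ≤ 6 * (a : ℝ) ^ 6 * (32 * a ^ 5) := by gcongr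
        _ = 192 * (a : ℝ) ^ 11 := by ring
        _ ≤ a * (a : ℝ) ^ 11 := by gcongr; linarith
        _ = _ := by ring)
  have h2 := exp_cube (x := (a : ℝ) ^ 6) (by positivity)
  have h3 : Real.exp (2 * a ^ 6) = Real.exp (a ^ 6) * Real.exp ((a : ℝ) ^ 6) := by
    rw [← Real.exp_add]; congr 1; ring
  rw [h3]
  have h4 : 8 * (6 * ((a : ℝ) ^ 6) ^ 2) ≤ ((a : ℝ) ^ 6) ^ 3 / 6 := by
    have : (10 : ℝ) ^ 7 ≤ a ^ 6 := ha'.trans (le_self_pow₀ ha1 (by norm_num))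
    have : (0 : ℝ) ≤ (a ^ 6) ^ 2 := by positivity
    nlinarith
  have h5 := Real.exp_pos ((a : ℝ) ^ 6)
  nlinarith

set_option maxHeartbeats 1000000 in
lemma core {V : Type} [DecidableEq V] (c : V → V → Fin 2) (hc : ∀ u v, c u v = c v u)
    (a : ℕ) (ha : 10 ^ 7 ≤ a) (k : Fin 2 → ℕ) (hk : ∀ i, a ^ 10 ≤ k i)
    (hk' : ∀ i, k i ≤ 8 * a ^ 10) (W : Finset V) (hno : ∀ i, ¬ HasM c i (k i) W)
    (hdeg : ∀ i, ∀ v ∈ W, ((nb c i v W).card : ℝ) ≤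
      (1 + 1 / (a : ℝ) ^ 5) * (k i / (k 0 + k 1)) * W.card) :
    (W.card : ℝ) ≤ Real.exp (-(2 * a)) * Bn k := by
  by_contra hcon
  push Not at hcon
  have ha' : (10 : ℝ) ^ 7 ≤ a := by exact_mod_cast ha
  have ha0 : (0 : ℝ) < a := by linarith
  have ha1 : (1 : ℝ) ≤ a := by linarith
  obtain ⟨S, hSa, hS1, hS2⟩ := exists_S a ha
  have hkr : ∀ i, (a : ℝ) ^ 10 ≤ k i := fun i => by exact_mod_cast hk i
  have hkr' : ∀ i, (k i : ℝ) ≤ 8 * (a : ℝ) ^ 10 := fun i => by exact_mod_cast hk' i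
  have hkp : ∀ i, (0 : ℝ) < k i := fun i => lt_of_lt_of_le (by positivity) (hkr i)
  -- powers
  have hp3 : (a : ℝ) ^ 7 ≤ a ^ 9 := pow_le_pow_right₀ ha1 (by norm_num)
  have hp4 : (a : ℝ) ≤ a ^ 9 := le_self_pow₀ ha1 (by norm_num)
  have hp5 : (a : ℝ) ^ 5 ≤ a ^ 9 := pow_le_pow_right₀ ha1 (by norm_num)
  have hp10 : (10 : ℝ) ^ 7 * a ^ 9 ≤ a ^ 10 := by
    rw [pow_succ (a : ℝ) 9, mul_comm]; gcongr
  have hp5' : (10 : ℝ) ^ 7 ≤ a ^ 5 := ha'.trans (le_self_pow₀ ha1 (by norm_num))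
  set n : ℝ := (W.card : ℝ) with hn
  have hnlow : Real.exp ((a : ℝ) ^ 10 / 2 - 2 * a) ≤ n := by
    refine le_trans ?_ hcon.le
    rw [sub_eq_add_neg, Real.exp_add, mul_comm]
    gcongr
    exact Bn_ge a k hk
  have hnlow2 : Real.exp (8 * a ^ 9 + 4 * a ^ 7) ≤ n :=
    (Real.exp_le_exp.2 (by linarith)).trans hnlow
  have hna : (a : ℝ) ^ 5 ≤ n := by
    refine le_trans ?_ hnlow2
    have := Real.add_one_le_exp (8 * (a : ℝ) ^ 9 + 4 * a ^ 7)
    have : (0 : ℝ) ≤ a ^ 7 := by positivity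
    linarith
  have hnpos : 0 < n := lt_of_lt_of_le (by positivity) hna
  set ε : ℝ := 1 / (a : ℝ) ^ 5 with hε
  have hε0 : 0 < ε := by positivity
  have hε1 : ε ≤ 1 / 10 ^ 7 := by rw [hε]; gcongr
  have hεn : 1 ≤ ε * n := by
    rw [hε, one_div, inv_mul_eq_div, le_div_iff₀ (by positivity)]; linarith
  set p : Fin 2 → ℝ := fun i => k i / (k 0 + k 1) with hp
  have hpsum : p 0 + p 1 = 1 := by
    simp only [hp]
    have h0 := hkp 0
    have h1 := hkp 1
    field_simp
  have hp9 : ∀ i, 1 / 9 ≤ p i := by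
    intro i
    simp only [hp]
    have h0 := hkr 0
    have h1 := hkr 1
    have h2 := hkr' 0
    have h3 := hkr' 1
    rw [div_le_div_iff₀ (by norm_num) (by linarith [hkp 0, hkp 1])]
    fin_cases i <;> simp <;> linarith
  have hp1 : ∀ i, p i ≤ 1 := by
    intro i
    have h0 := hp9 0
    have h1 := hp9 1
    fin_cases i <;> simp <;> linarith
  have hdeg2 : ∀ i, ∀ x ∈ W, (p i - 3 * ε + ε) * n ≤ (nb c i x W).card := by
    intro i x hx
    have h0 := hdeg 0 x hx
    have h1 := hdeg 1 x hx
    have h2 : n ≤ (nb c 0 x W).card + (nb c 1 x W).card + 1 := by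
      rw [hn]; exact_mod_cast card_nb_add c x W
    have e0 : ε * p 0 * n ≤ ε * n := by
      have := hp1 0; have : 0 < ε * n := by positivity
      nlinarith
    have e1 : ε * p 1 * n ≤ ε * n := by
      have := hp1 1; have : 0 < ε * n := by positivity
      nlinarith
    change _ ≤ (1 + ε) * p 0 * n at h0
    change _ ≤ (1 + ε) * p 1 * n at h1
    have hps : p 0 = 1 - p 1 := by linarith
    have hi : i = 0 ∨ i = 1 := by fin_cases i <;> simp
    rcases hi with rfl | rfl
    · rw [hps]; nlinarith
    · rw [hps] at h0 e0; nlinarith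
  have hK1 := core_K1 a ha
  have hK2 := core_K2 a ha S hS2
  have ht2 : 2 ≤ a ^ 6 := by
    have : a ≤ a ^ 6 := Nat.le_self_pow (by norm_num) a
    omega
  have hWne : W.Nonempty := by
    rw [← Finset.card_pos]
    rw [hn] at hnpos
    exact_mod_cast hnpos
  have hbase10 : ∀ i, 1 / 10 ≤ p i - 3 * ε := fun i => by have := hp9 i; linarith
  obtain ⟨i, T, hTW, M, hMW, hTc, hT, hTM, hMc⟩ := book c hc (a ^ 6) ht2 (fun i => p i - 3 * ε)
    (fun i => by have := hbase10 i; linarith) (fun i => by have := hp1 i; linarith) S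
    (Real.exp (4 * a ^ 3)) (Real.exp (2 * a ^ 6)) hK1 hK2 _ (fun _ => a ^ 6) (fun _ => S) rfl
    (fun _ => le_rfl) W (fun _ => W) (fun _ => ε) (fun _ => hWne) hdeg2
    (by
      intro _
      have h1 := one_sub_pow (a ^ 6) ht2
      have h2 : 16 < ε * 2 ^ S := by
        rw [hε, one_div, inv_mul_eq_div, lt_div_iff₀ (by positivity)]; exact hS1
      have : (0 : ℝ) < ε * 2 ^ S := by positivity
      nlinarith)
    (by
      simp only [Fin.sum_univ_two]
      rw [← Real.exp_nat_mul, ← Real.exp_nat_mul, ← Real.exp_add]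
      refine le_trans (Real.exp_le_exp.2 ?_) hnlow2
      push_cast
      have : (S : ℝ) ≤ a := by exact_mod_cast hSa
      calc ((a : ℝ) ^ 6 + a ^ 6) * (4 * a ^ 3) + (S + S) * (2 * a ^ 6)
          ≤ ((a : ℝ) ^ 6 + a ^ 6) * (4 * a ^ 3) + (a + a) * (2 * a ^ 6) := by gcongr
        _ = _ := by ring)
  have hat : a ^ 6 ≤ a ^ 10 := Nat.pow_le_pow_right (by omega) (by norm_num)
  have hpos : ∀ i, 0 < k i := fun i => by exact_mod_cast hkp i
  have hdisj : Disjoint T M :=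
    Finset.disjoint_left.2 fun u hu hu' => (hTM u hu u hu').1 rfl
  have hup := page_bound c hc k W hno i (a ^ 6) (hat.trans (hk i)) hpos T M hTW hMW hTc hT
    (fun u hu v hv => (hTM u hu v hv).2) hdisj (1 / (72 * (a : ℝ) ^ 10)) (by positivity) (by
      have h1 : 1 / 9 ≤ p (1 - i) := hp9 (1 - i)
      simp only [hp] at h1
      have h0 := hkp 0
      have h0' := hkp 1
      rw [div_le_div_iff₀ (by norm_num) (by linarith)] at h1
      rw [one_div, inv_mul_eq_div, div_le_iff₀ (by positivity)]
      have h2 := hkr' i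
      have h3 := hkp i
      have h4 := hkp (1 - i)
      nlinarith)
  -- lower bound for the base power
  have hb1 : p i * Real.exp (-(54 * ε)) ≤ p i - 3 * ε := by
    have := exp_neg_two_le (x := 27 * ε) (by linarith) (by linarith)
    have h9 := hp9 i
    rw [show 54 * ε = 2 * (27 * ε) by ring]
    have : p i * Real.exp (-(2 * (27 * ε))) ≤ p i * (1 - 27 * ε) := by gcongr
    nlinarith
  have hpi : 0 < p i := by have := hp9 i; linarith
  have hb2 : p i ^ (a ^ 6) * Real.exp (-(54 * a)) ≤ (p i - 3 * ε) ^ (a ^ 6) := by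
    have h1 := pow_le_pow_left₀ (by positivity) hb1 (a ^ 6)
    rw [mul_pow, ← Real.exp_nat_mul] at h1
    have h2 : ((a ^ 6 : ℕ) : ℝ) * -(54 * ε) = -(54 * a) := by
      rw [hε]; push_cast; field_simp
    rwa [h2] at h1
  have hb3 : Real.exp (-(3 * a)) ≤ (p i - 3 * ε) ^ S := by
    have h1 : Real.exp (-3) ≤ p i - 3 * ε := by
      refine le_trans ?_ (hbase10 i)
      rw [Real.exp_neg, one_div]
      refine inv_anti₀ (by norm_num) ?_
      have h1 := Real.exp_one_gt_d9
      have h2 : Real.exp 3 = Real.exp 1 ^ 3 := by rw [← Real.exp_nat_mul]; norm_num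
      rw [h2]
      calc (10 : ℝ) ≤ 2.7182818283 ^ 3 := by norm_num
        _ ≤ _ := by gcongr
    calc Real.exp (-(3 * a)) = Real.exp (-3) ^ a := by
          rw [← Real.exp_nat_mul]; congr 1; ring
      _ ≤ Real.exp (-3) ^ S :=
          pow_le_pow_of_le_one (Real.exp_pos _).le (Real.exp_le_one_iff.2 (by norm_num)) hSa
      _ ≤ _ := by gcongr
  have hlow : p i ^ (a ^ 6) * Real.exp (-(57 * a)) * (Real.exp (-(2 * a)) * Bn k) < M.card := by
    refine lt_of_lt_of_le ?_ hMc
    rw [pow_add]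
    have h1 : p i ^ (a ^ 6) * Real.exp (-(57 * a)) ≤
        (p i - 3 * ε) ^ (a ^ 6) * (p i - 3 * ε) ^ S := by
      have : Real.exp (-(57 * (a : ℝ))) = Real.exp (-(54 * a)) * Real.exp (-(3 * a)) := by
        rw [← Real.exp_add]; congr 1; ring
      rw [this, ← mul_assoc]
      have := hbase10 i
      have : 0 ≤ p i - 3 * ε := by linarith
      gcongr
    calc _ < p i ^ (a ^ 6) * Real.exp (-(57 * a)) * n := by gcongr
      _ ≤ _ := by gcongr
  have hfin := hlow.trans_le hup
  have hBpos : (0 : ℝ) < Bn k := lt_of_lt_of_le (Real.exp_pos _) (Bn_ge a k hk)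
  have hcmp : Real.exp (-(((a ^ 6 : ℕ) : ℝ) * ((a ^ 6 : ℕ) - 1) / 2 * (1 / (72 * (a : ℝ) ^ 10)))) ≤
      Real.exp (-(57 * a)) * Real.exp (-(2 * a)) := by
    rw [← Real.exp_add]
    refine Real.exp_le_exp.2 ?_
    push_cast
    have h1 : (a : ℝ) ^ 12 / 4 ≤ (a : ℝ) ^ 6 * (a ^ 6 - 1) / 2 := by
      have : (2 : ℝ) ≤ a ^ 6 := by exact_mod_cast ht2
      nlinarith
    have h2 : (a : ℝ) ^ 12 / 4 * (1 / (72 * (a : ℝ) ^ 10)) = a ^ 2 / 288 := by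
      field_simp; norm_num
    have h3 : (a : ℝ) ^ 12 / 4 * (1 / (72 * (a : ℝ) ^ 10)) ≤
      (a : ℝ) ^ 6 * (a ^ 6 - 1) / 2 * (1 / (72 * (a : ℝ) ^ 10)) := by gcongr
    rw [h2] at h3
    nlinarith
  have hq : 0 < p i ^ (a ^ 6) := by positivity
  have : p i ^ (a ^ 6) * Real.exp (-(((a ^ 6 : ℕ) : ℝ) * ((a ^ 6 : ℕ) - 1) / 2 *
      (1 / (72 * (a : ℝ) ^ 10)))) * Bn k ≤
      p i ^ (a ^ 6) * (Real.exp (-(57 * a)) * Real.exp (-(2 * a))) * Bn k := by gcongr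
  change _ < p i ^ (a ^ 6) * _ * _ at hfin
  linarith

end BookAlg

open Finset in
lemma Bn_update (k : Fin 2 → ℕ) (i : Fin 2) (hi : 0 < k i) :
    (Bn (Function.update k i (k i - 1)) : ℝ) = k i / (k 0 + k 1) * Bn k := by
  have h01 : i = 0 ∨ i = 1 := by fin_cases i <;> simp
  have hpos : (0 : ℝ) < k i := by exact_mod_cast hi
  have hpos' : (0 : ℝ) < k 0 + k 1 := by
    rcases h01 with rfl | rfl <;> positivity
  rw [div_mul_eq_mul_div, eq_div_iff hpos'.ne']
  rcases h01 with rfl | rfl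
  · obtain ⟨n, hn⟩ : ∃ n, k 0 = n + 1 := ⟨k 0 - 1, by omega⟩
    have h := Nat.add_one_mul_choose_eq (n + k 1) n
    have e : Bn (Function.update k 0 (k 0 - 1)) = (n + k 1).choose n := by
      simp [Bn, hn]
    have e2 : Bn k = (n + k 1 + 1).choose (n + 1) := by
      simp only [Bn, hn]; congr 1; ring
    rw [e, e2, hn]
    have h' : ((n : ℝ) + k 1 + 1) * ((n + k 1).choose n : ℕ) =
      ((n + k 1 + 1).choose (n + 1) : ℕ) * (n + 1) := by exact_mod_cast h
    push_cast
    linarith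
  · obtain ⟨n, hn⟩ : ∃ n, k 1 = n + 1 := ⟨k 1 - 1, by omega⟩
    have h := Nat.add_one_mul_choose_eq (n + k 0) n
    have e : Bn (Function.update k 1 (k 1 - 1)) = (n + k 0).choose n := by
      simp only [Bn, hn]
      simp [add_comm n, Nat.choose_symm_add]
    have e2 : Bn k = (n + k 0 + 1).choose (n + 1) := by
      simp only [Bn, hn]
      rw [Nat.choose_symm_add]
      congr 1; ring
    rw [e, e2, hn]
    have h' : ((n : ℝ) + k 0 + 1) * ((n + k 0).choose n : ℕ) =
      ((n + k 0 + 1).choose (n + 1) : ℕ) * (n + 1) := by exact_mod_cast h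
    push_cast
    linarith

lemma ind {V : Type} [DecidableEq V] (c : V → V → Fin 2) (hc : ∀ u v, c u v = c v u)
    (a : ℕ) (ha : 10 ^ 7 ≤ a) : ∀ j ≤ a ^ 6, ∀ k : Fin 2 → ℕ, (∀ i, a ^ 10 + j ≤ k i) →
    (∀ i, k i ≤ 8 * a ^ 10) → ∀ W : Finset V, (∀ i, ¬ HasM c i (k i) W) →
    (W.card : ℝ) * (1 + 1 / (a : ℝ) ^ 5) ^ j ≤ Bn k := by
  have ha0 : (0 : ℝ) < a := by
    have : (10 : ℝ) ^ 7 ≤ a := by exact_mod_cast ha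
    linarith
  intro j
  induction j with
  | zero =>
    intro _ k _ _ W hno
    by_contra hcon
    push Not at hcon
    have : Bn k ≤ W.card := by
      have : (Bn k : ℝ) < W.card := by simpa using hcon
      exact_mod_cast this.le
    rcases es_weak hc (k 0) (k 1) W this with h | h
    · exact hno 0 h
    · exact hno 1 h
  | succ j ih =>
    intro hj k hk hk' W hno
    by_contra hcon
    push Not at hcon
    set b : ℝ := 1 + 1 / (a : ℝ) ^ 5 with hb
    have hb0 : 0 < b := by positivity
    have hkpos : ∀ i, 0 < k i := fun i => by have := hk i; omega
    have hdeg : ∀ i, ∀ v ∈ W, ((nb c i v W).card : ℝ) ≤ b * (k i / (k 0 + k 1)) * W.card := by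
      intro i v hv
      have h1 := ih (by omega) (Function.update k i (k i - 1))
        (by
          intro i'
          by_cases h : i' = i
          · subst h; simp; have := hk i'; omega
          · simp [h]; have := hk i'; omega)
        (by
          intro i'
          by_cases h : i' = i
          · subst h; simp; have := hk' i'; omega
          · simpa [h] using hk' i')
        (nb c i v W)
        (by
          intro i' hM
          by_cases h : i' = i
          · subst h
            simp only [Function.update_self] at hM
            have := hM.of_nb hc hv
            rw [Nat.sub_add_cancel (hkpos i')] at this
            exact hno i' this
          · simp only [Function.update_of_ne h] at hM
            exact hno i' (hM.mono (Finset.filter_subset _ _)))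
      rw [Bn_update k i (hkpos i)] at h1
      have hp : (0 : ℝ) ≤ k i / (k 0 + k 1) := by positivity
      have h2 : ((nb c i v W).card : ℝ) * b ^ j ≤ (b * (k i / (k 0 + k 1)) * W.card) * b ^ j := by
        refine h1.trans ?_
        calc (k i / (k 0 + k 1) : ℝ) * Bn k ≤ (k i / (k 0 + k 1) : ℝ) * (W.card * b ^ (j + 1)) := by
              gcongr
          _ = _ := by rw [pow_succ]; ring
      exact le_of_mul_le_mul_right h2 (by positivity)
    have h1 := core c hc a ha k (fun i => by have := hk i; omega) hk' W hno hdeg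
    have h2 : b ^ (j + 1) ≤ Real.exp (2 * a) := by
      calc b ^ (j + 1) ≤ b ^ (a ^ 6) := pow_le_pow_right₀ (by rw [hb]; simp) hj
        _ ≤ Real.exp (1 / (a : ℝ) ^ 5) ^ (a ^ 6) := by
            gcongr
            rw [hb, add_comm]
            exact Real.add_one_le_exp _
        _ = Real.exp a := by
            rw [← Real.exp_nat_mul]
            congr 1
            push_cast
            field_simp
        _ ≤ _ := Real.exp_le_exp.2 (by linarith)
    have h3 : (W.card : ℝ) * b ^ (j + 1) ≤ Real.exp (-(2 * a)) * Bn k * Real.exp (2 * a) := by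
      gcongr
    have h4 : Real.exp (-(2 * (a : ℝ))) * Real.exp (2 * a) = 1 := by
      rw [← Real.exp_add]; simp
    have h5 : Real.exp (-(2 * a)) * Bn k * Real.exp (2 * a) = Bn k := by
      linear_combination (Bn k : ℝ) * h4
    linarith

lemma monoClique_iff {n : ℕ} (c : Sym2 (Fin n) → Fin 2) (i : Fin 2) (k : ℕ) :
    monoClique c i k ↔ HasM (fun u v => c s(u, v)) i k Finset.univ := by
  constructor
  · rintro ⟨A, hA, h⟩
    exact ⟨A, Finset.subset_univ _, hA, h⟩
  · rintro ⟨A, _, hA, h⟩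
    exact ⟨A, hA, h⟩

lemma ramsey2_le_of {k l : ℕ} {B : ℝ} (hB : 0 ≤ B)
    (h : ∀ (n : ℕ) (c : Fin n → Fin n → Fin 2), (∀ u v, c u v = c v u) →
      (∀ i, ¬ HasM c i ((![k, l] : Fin 2 → ℕ) i) Finset.univ) → (n : ℝ) ≤ B) :
    (ramsey2 k l : ℝ) ≤ B + 1 := by
  rcases Nat.eq_zero_or_pos (ramsey2 k l) with h0 | h0
  · rw [h0]; simp; linarith
  · have h1 : ramsey2 k l - 1 < ramsey2 k l := by omega
    have h2 := Nat.notMem_of_lt_sInf (show ramsey2 k l - 1 < sInf _ from h1)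
    simp only [Set.mem_ofPred_eq, not_forall, not_exists] at h2
    obtain ⟨c, hc⟩ := h2
    have h3 := h (ramsey2 k l - 1) (fun u v => c s(u, v)) (fun u v => by rw [Sym2.eq_swap])
      (fun i hi => hc i ((monoClique_iff c i _).2 hi))
    have h4 : ((ramsey2 k l - 1 : ℕ) : ℝ) = (ramsey2 k l : ℝ) - 1 := by
      rw [Nat.cast_sub h0]; simp
    linarith

lemma ramsey2_small (j m : ℕ) : ramsey2 (j + 1) (m + 1) ≤ (j + m).choose j := by
  refine Nat.sInf_le ?_
  intro c
  rcases es (c := fun u v => c s(u, v)) (fun u v => by rw [Sym2.eq_swap]) _ j m rfl Finset.univ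
    (by simp) with h | h
  · exact ⟨0, (monoClique_iff c 0 _).2 h⟩
  · exact ⟨1, (monoClique_iff c 1 _).2 h⟩

lemma ramsey2_half (k l : ℕ) (hk : 1 ≤ k) (hl : 1 ≤ l) :
    (ramsey2 k l : ℝ) ≤ 1 / 2 * ((k + l).choose k : ℕ) := by
  obtain ⟨j, rfl⟩ : ∃ j, k = j + 1 := ⟨k - 1, by omega⟩
  obtain ⟨m, rfl⟩ : ∃ m, l = m + 1 := ⟨l - 1, by omega⟩
  have h := ramsey2_small j m
  have h2 : 2 * (j + m).choose j ≤ (j + 1 + (m + 1)).choose (j + 1) := by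
    rw [show j + 1 + (m + 1) = (j + m + 1) + 1 by ring, Nat.choose_succ_succ]
    have h3 := Nat.choose_le_choose j (Nat.le_succ (j + m))
    have h4 : (j + m + 1).choose (j + 1) = (j + m).choose j + (j + m).choose (j + 1) :=
      Nat.choose_succ_succ _ _
    simp only [Nat.succ_eq_add_one] at *
    omega
  have h5 : (2 : ℝ) * ramsey2 (j + 1) (m + 1) ≤ ((j + 1 + (m + 1)).choose (j + 1) : ℕ) := by
    exact_mod_cast (Nat.mul_le_mul_left 2 h).trans h2
  linarith

lemma ramsey2_large (a k l : ℕ) (ha : 10 ^ 7 ≤ a) (hk : 2 * a ^ 10 ≤ k) (hl : 2 * a ^ 10 ≤ l)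
    (hk' : k ≤ 8 * a ^ 10) (hl' : l ≤ 8 * a ^ 10) :
    (ramsey2 k l : ℝ) ≤ Real.exp (-((a - 1) * Real.log 2)) * ((k + l).choose k : ℕ) := by
  have ha0 : (0 : ℝ) < a := by
    have : (10 : ℝ) ^ 7 ≤ a := by exact_mod_cast ha
    linarith
  have h610 : a ^ 6 ≤ a ^ 10 := Nat.pow_le_pow_right (by omega) (by norm_num)
  have hb : (2 : ℝ) ^ a ≤ (1 + 1 / (a : ℝ) ^ 5) ^ (a ^ 6) := by
    have h1 := one_add_mul_le_pow (a := 1 / (a : ℝ) ^ 5)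
      (by have : 0 ≤ 1 / (a : ℝ) ^ 5 := by positivity
          linarith) (a ^ 5)
    have h2 : (1 : ℝ) + ((a ^ 5 : ℕ) : ℝ) * (1 / (a : ℝ) ^ 5) = 2 := by
      push_cast; field_simp; norm_num
    rw [h2] at h1
    calc (2 : ℝ) ^ a ≤ ((1 + 1 / (a : ℝ) ^ 5) ^ (a ^ 5)) ^ a := by gcongr
      _ = _ := by rw [← pow_mul]; congr 1
  have hmain := ramsey2_le_of (k := k) (l := l) (B := ((k + l).choose k : ℕ) / 2 ^ a)
    (by positivity) (by
      intro n c hc hno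
      have h1 := ind c hc a ha (a ^ 6) le_rfl ![k, l]
        (by intro i; fin_cases i <;> simp <;> omega)
        (by intro i; fin_cases i <;> simp <;> omega) Finset.univ hno
      rw [le_div_iff₀ (by positivity)]
      have h2 : (Bn ![k, l] : ℝ) = ((k + l).choose k : ℕ) := by simp [Bn]
      rw [h2, Finset.card_fin] at h1
      refine le_trans ?_ h1
      gcongr)
  have hbig : (1 : ℝ) ≤ ((k + l).choose k : ℕ) / 2 ^ a := by
    rw [le_div_iff₀ (by positivity), one_mul]
    have h1 : a ≤ a ^ 10 := Nat.le_self_pow (by norm_num) a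
    exact_mod_cast two_pow_le_choose k l a (by omega) (by omega)
  have he : Real.exp (-((a - 1) * Real.log 2)) = 2 / 2 ^ a := by
    rw [show -(((a : ℝ) - 1) * Real.log 2) = Real.log 2 - a * Real.log 2 by ring, Real.exp_sub,
      Real.exp_log (by norm_num), Real.exp_nat_mul, Real.exp_log (by norm_num)]
  rw [he, div_mul_eq_mul_div, mul_div_assoc]
  linarith

lemma log_bound (a k : ℕ) (ha : 10 ^ 7 ≤ a) (hk : 1 ≤ k) (hk' : k ≤ 8 * a ^ 10) :
    Real.log k * Real.log k ≤ (a - 1) * Real.log 2 := by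
  have ha' : (10 : ℝ) ^ 7 ≤ a := by exact_mod_cast ha
  have ha0 : (0 : ℝ) < a := by linarith
  set y : ℝ := √(a : ℝ) with hy
  have hy2 : y ^ 2 = a := Real.sq_sqrt ha0.le
  have hy0 : 0 < y := Real.sqrt_pos.2 ha0
  set x : ℝ := √y with hx
  have hx2 : x ^ 2 = y := Real.sq_sqrt hy0.le
  have hx0 : 0 < x := Real.sqrt_pos.2 hy0
  have hy3 : 3162 ≤ y := Real.le_sqrt_of_sq_le (by linarith)
  have h1 : Real.log a ≤ 4 * x := by
    rw [← hy2, ← hx2, ← pow_mul, Real.log_pow]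
    have := Real.log_le_sub_one_of_pos hx0
    push_cast
    linarith
  have h2 : Real.log k ≤ 11 * Real.log a := by
    have : (k : ℝ) ≤ (a : ℝ) ^ 11 := by
      have h3 : (k : ℝ) ≤ 8 * (a : ℝ) ^ 10 := by exact_mod_cast hk'
      refine h3.trans ?_
      rw [pow_succ (a : ℝ) 10, mul_comm]
      gcongr
      linarith
    have h4 := Real.log_le_log (by exact_mod_cast hk) this
    rw [Real.log_pow] at h4
    exact_mod_cast h4
  have h0 : 0 ≤ Real.log k := Real.log_natCast_nonneg k
  have h3 : Real.log k ≤ 44 * x := by linarith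
  have h4 : Real.log k * Real.log k ≤ 44 * x * (44 * x) := by gcongr
  have h5 := Real.log_two_gt_d9
  have h6 : 44 * x * (44 * x) = 1936 * y := by rw [← hx2]; ring
  have h7 : ((a : ℝ) - 1) * 0.69 ≤ (a - 1) * Real.log 2 := by
    refine mul_le_mul_of_nonneg_left (by linarith) (by linarith)
  nlinarith

lemma exists_a (m : ℕ) (hm : 2 * (10 ^ 7) ^ 10 ≤ m) :
    ∃ a, 10 ^ 7 ≤ a ∧ 2 * a ^ 10 ≤ m ∧ m ≤ 4 * a ^ 10 := by
  have hb : 10 ^ 7 ≤ m := le_trans (by norm_num) hm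
  set a := Nat.findGreatest (fun a => 2 * a ^ 10 ≤ m) m with ha
  have h1 : 10 ^ 7 ≤ a := Nat.le_findGreatest hb hm
  have h2 : 2 * a ^ 10 ≤ m :=
    Nat.findGreatest_spec (P := fun a => 2 * a ^ 10 ≤ m) hb hm
  refine ⟨a, h1, h2, ?_⟩
  have h3 : m < 2 * (a + 1) ^ 10 := by
    by_contra hcon
    push Not at hcon
    have h4 : a + 1 ≤ (a + 1) ^ 10 := Nat.le_self_pow (by norm_num) _
    have := Nat.le_findGreatest (P := fun a => 2 * a ^ 10 ≤ m) (n := m) (m := a + 1)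
      (by omega) hcon
    omega
  have h5 : (a + 1) ^ 10 ≤ 2 * a ^ 10 := by
    have h6 : ((a : ℝ) + 1) ^ 10 ≤ 2 * (a : ℝ) ^ 10 := by
      have h7 : (10 : ℝ) ^ 7 ≤ a := by exact_mod_cast h1
      calc ((a : ℝ) + 1) ^ 10 ≤ (1.01 * a) ^ 10 := by
            gcongr
            linarith
        _ = 1.01 ^ 10 * (a : ℝ) ^ 10 := by ring
        _ ≤ _ := by gcongr; norm_num
    exact_mod_cast h6
  omega

/-- There is `C > 0` such that for `k ≥ 3` and `l/2 ≤ k ≤ 2l`,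
`r(k,l) ≤ k^{-C log k / log log k} C(k+l, k)`. -/
theorem diagonal_ramsey_upper :
    ∃ C : ℝ, 0 < C ∧ ∀ k l : ℕ, 3 ≤ k → l ≤ 2 * k → k ≤ 2 * l →
      (ramsey2 k l : ℝ) ≤
        (k : ℝ) ^ (-(C * Real.log k / Real.log (Real.log k))) * ((k + l).choose k) := by
  obtain ⟨K₀, hK₀⟩ : ∃ K₀ : ℕ, K₀ = 4 * (10 ^ 7) ^ 10 := ⟨_, rfl⟩
  set f : ℕ → ℝ := fun k => Real.log k * Real.log k / Real.log (Real.log k) with hf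
  obtain ⟨D, hD1, hD⟩ : ∃ D : ℝ, 1 ≤ D ∧ ∀ k < K₀, f k ≤ D := by
    obtain ⟨D, hD⟩ := ((Set.finite_Iio K₀).image f).bddAbove
    exact ⟨max 1 D, le_max_left _ _,
      fun k hk => (hD ⟨k, hk, rfl⟩).trans (le_max_right _ _)⟩
  have hl2 : 0 < Real.log 2 := Real.log_pos (by norm_num)
  have hl2' : Real.log 2 < 1 := by have := Real.log_two_lt_d9; linarith
  set C : ℝ := Real.log 2 / D with hC
  have hC0 : 0 < C := by positivity
  have hC1 : C ≤ 1 := by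
    rw [hC, div_le_one (by linarith)]; linarith
  refine ⟨C, hC0, ?_⟩
  intro k l hk hlk hkl
  have hk0 : (0 : ℝ) < k := by
    have : 0 < k := by omega
    exact_mod_cast this
  have hexp : (k : ℝ) ^ (-(C * Real.log k / Real.log (Real.log k))) = Real.exp (-(C * f k)) := by
    rw [Real.rpow_def_of_pos hk0]
    congr 1
    simp only [hf]
    ring
  rw [hexp]
  rcases lt_or_ge k K₀ with hsm | hlg
  · refine (ramsey2_half k l (by omega) (by omega)).trans ?_
    gcongr
    have h1 : C * f k ≤ Real.log 2 := by
      have := mul_le_mul_of_nonneg_left (hD k hsm) hC0.le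
      have h2 : C * D = Real.log 2 := by rw [hC]; field_simp
      linarith
    calc (1 : ℝ) / 2 = Real.exp (-Real.log 2) := by
          rw [Real.exp_neg, Real.exp_log (by norm_num)]; norm_num
      _ ≤ _ := Real.exp_le_exp.2 (by linarith)
  · obtain ⟨a, ha, ha1, ha2⟩ := exists_a (min k l) (by
      rw [le_min_iff]; constructor <;> omega)
    have hm1 := min_le_left k l
    have hm2 := min_le_right k l
    have hm3 : k ≤ 2 * min k l := by
      rcases min_choice k l with h | h <;> rw [h] <;> omega
    have hm4 : l ≤ 2 * min k l := by
      rcases min_choice k l with h | h <;> rw [h] <;> omega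
    refine (ramsey2_large a k l ha (by omega) (by omega) (by omega) (by omega)).trans ?_
    refine mul_le_mul_of_nonneg_right (Real.exp_le_exp.2 (neg_le_neg ?_)) (by positivity)
    have hlb := log_bound a k ha (by omega) (by omega)
    refine le_trans ?_ hlb
    have hk16 : (16 : ℝ) ≤ k := by
      have : 16 ≤ k := by omega
      exact_mod_cast this
    have hlogk : Real.exp 1 ≤ Real.log k := by
      have h1 := Real.exp_one_lt_d9
      have h2 : Real.log 16 ≤ Real.log k := Real.log_le_log (by norm_num) hk16
      have h3 : Real.log 16 = 4 * Real.log 2 := by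
        rw [show (16 : ℝ) = 2 ^ 4 by norm_num, Real.log_pow]; norm_num
      have := Real.log_two_gt_d9
      linarith
    have hll : 1 ≤ Real.log (Real.log k) := by
      rw [Real.le_log_iff_exp_le (lt_of_lt_of_le (Real.exp_pos 1) hlogk)]
      exact hlogk
    have hfle : f k ≤ Real.log k * Real.log k :=
      div_le_self (mul_self_nonneg _) hll
    have hf0 : 0 ≤ f k := div_nonneg (mul_self_nonneg _) (by linarith)
    nlinarith
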